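/- arXiv:1805.04192 — 4 statements merged into one kernel-verified Lean document; each statement's English description precedes it below -/
import Mathlib

section
/- Let n ≥ 1, let p > 1 be a real number, and let f : ℝⁿ → ℝ be a continuously differentiable, non-negative function that is weakly subharmonic, meaning that for every non-negative smooth compactly supported test function ψ : ℝⁿ → ℝ one has ∫ ⟪∇f(x), ∇ψ(x)⟫ dx ≤ 0. Then for every non-negative smooth compactly supported φ : ℝⁿ → ℝ one has the Caccioppoli-type inequality (p−1)² ∫ f(x)^{p−2} φ(x)² ‖∇f(x)‖² dx ≤ 4 ∫ f(x)^p ‖∇φ(x)‖² dx, where for 1 < p < 2 the integrand on the left is interpreted as 0 at points where f vanishes. (This is the key displayed inequality in the proof of the paper's Proposition 2.1.) -/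
open MeasureTheory Metric Real Filter Asymptotics RealInnerProductSpace

noncomputable section

/-- `f` is weakly subharmonic: `∫ ⟪∇f, ∇ψ⟫ ≤ 0` for every non-negative smooth
compactly supported test function `ψ`. -/
def WeaklySubharmonic {n : ℕ} (f : EuclideanSpace ℝ (Fin n) → ℝ) : Prop :=
  ∀ ψ : EuclideanSpace ℝ (Fin n) → ℝ, ContDiff ℝ (⊤ : ℕ∞) ψ → HasCompactSupport ψ →
    (∀ x, 0 ≤ ψ x) → ∫ x, ⟪gradient f x, gradient ψ x⟫ ≤ 0

section aux

variable {n : ℕ}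

local notation "E" => EuclideanSpace ℝ (Fin n)

lemma aux_grad_cont {f : E → ℝ} (hf : ContDiff ℝ 1 f) : Continuous (gradient f) := by
  unfold gradient
  exact (InnerProductSpace.toDual ℝ E).symm.continuous.comp (hf.continuous_fderiv one_ne_zero)

lemma aux_grad_zero {f : E → ℝ} {x : E} (h : fderiv ℝ f x = 0) : gradient f x = 0 := by
  simp [gradient, h]

lemma aux_grad_supp {f : E → ℝ} (hf : HasCompactSupport f) : HasCompactSupport (gradient f) := by
  refine (hf.fderiv (𝕜 := ℝ)).mono ?_
  intro x hx h
  exact hx (aux_grad_zero h)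

lemma aux_inner (f g : E → ℝ) (x : E) : ⟪gradient f x, gradient g x⟫ = fderiv ℝ g x (gradient f x) := by
  rw [real_inner_comm]
  simp [gradient]

lemma aux_moll {ψ : E → ℝ} (hψ : ContDiff ℝ 1 ψ) (hc : HasCompactSupport ψ) (h0 : ∀ x, 0 ≤ ψ x)
    {η : ℝ} (hη : 0 < η) :
    ∃ χ : E → ℝ, ContDiff ℝ (⊤ : ℕ∞) χ ∧ HasCompactSupport χ ∧ (∀ x, 0 ≤ χ x) ∧
      ∀ x, ‖gradient ψ x - gradient χ x‖ ≤
        (cthickening 1 (tsupport ψ)).indicator (fun _ => η) x := by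
  have hcont : Continuous (fderiv ℝ ψ) := hψ.continuous_fderiv one_ne_zero
  have huc : UniformContinuous (fderiv ℝ ψ) :=
    (hc.fderiv (𝕜 := ℝ)).uniformContinuous_of_continuous hcont
  obtain ⟨δ, hδ, hδ'⟩ := Metric.uniformContinuous_iff.1 huc η hη
  set r := min δ 1 with hr
  have hr0 : 0 < r := lt_min hδ one_pos
  let b : ContDiffBump (0 : E) := ⟨r / 2, r, by positivity, by linarith⟩
  have hbr : b.rOut = r := rfl
  let χ : E → ℝ := convolution (b.normed volume) ψ (ContinuousLinearMap.lsmul ℝ ℝ) volume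
  have hder : ∀ x, fderiv ℝ χ x =
      convolution (b.normed volume) (fderiv ℝ ψ) (ContinuousLinearMap.lsmul ℝ ℝ) volume x := by
    intro x
    have := (hc.hasFDerivAt_convolution_right (ContinuousLinearMap.lsmul ℝ ℝ)
      ((b.continuous_normed (μ := volume)).locallyIntegrable (μ := volume)) hψ x).fderiv
    rw [this]
    unfold convolution
    congr 1
  have hdist : ∀ x, ‖gradient ψ x - gradient χ x‖ =
      dist (fderiv ℝ χ x) (fderiv ℝ ψ x) := by
    intro x
    unfold gradient
    rw [← map_sub, LinearIsometryEquiv.norm_map, dist_comm, dist_eq_norm]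
  refine ⟨χ, ?_, ?_, ?_, ?_⟩
  · exact b.hasCompactSupport_normed.contDiff_convolution_left _ b.contDiff_normed
      hψ.continuous.locallyIntegrable
  · exact b.hasCompactSupport_normed.convolution _ hc
  · intro x
    exact integral_nonneg fun t => mul_nonneg (b.nonneg_normed t) (h0 _)
  · intro x
    rw [hdist, hder]
    by_cases hx : x ∈ cthickening 1 (tsupport ψ)
    · rw [Set.indicator_of_mem hx]
      refine b.dist_normed_convolution_le hcont.aestronglyMeasurable ?_
      intro y hy
      exact (hδ' (lt_of_lt_of_le (mem_ball.1 hy) (min_le_left _ _))).le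
    · rw [Set.indicator_of_notMem hx]
      have hz : ∀ y ∈ ball x 1, fderiv ℝ ψ y = 0 := by
        intro y hy
        by_contra hne
        have hys : y ∈ tsupport ψ := support_fderiv_subset ℝ hne
        exact hx (mem_cthickening_of_dist_le x y 1 _ hys (by
          rw [dist_comm]; exact (mem_ball.1 hy).le))
      refine b.dist_normed_convolution_le hcont.aestronglyMeasurable ?_
      intro y hy
      rw [hz y (ball_subset_ball (min_le_right _ _) hy), hz x (mem_ball_self one_pos), dist_self]

lemma aux_sub {f : E → ℝ} (hf : ContDiff ℝ 1 f) (hsub : WeaklySubharmonic f)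
    {ψ : E → ℝ} (hψ : ContDiff ℝ 1 ψ) (hc : HasCompactSupport ψ) (h0 : ∀ x, 0 ≤ ψ x) :
    ∫ x, ⟪gradient f x, gradient ψ x⟫ ≤ 0 := by
  have hfc := aux_grad_cont hf
  have hint : ∀ {χ : E → ℝ}, ContDiff ℝ 1 χ → HasCompactSupport χ →
      Integrable (fun x => ⟪gradient f x, gradient χ x⟫) := by
    intro χ h1 h2
    refine (hfc.inner (aux_grad_cont h1)).integrable_of_hasCompactSupport
      ((aux_grad_supp h2).mono ?_)
    intro x hx h
    apply hx
    simp only [h, inner_zero_right]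
  set K := cthickening 1 (tsupport ψ) with hK
  have hKc : IsCompact K := hc.isCompact.cthickening
  have hKi : Integrable (K.indicator fun x => ‖gradient f x‖) :=
    (hfc.norm.continuousOn.integrableOn_compact hKc).integrable_indicator hKc.measurableSet
  set J := ∫ x, K.indicator (fun x => ‖gradient f x‖) x with hJ
  have hJ0 : 0 ≤ J := integral_nonneg fun x => Set.indicator_nonneg (fun _ _ => norm_nonneg _) _
  have key : ∀ η : ℝ, 0 < η → ∫ x, ⟪gradient f x, gradient ψ x⟫ ≤ η * J := by
    intro η hη
    obtain ⟨χ, h1, h2, h3, h4⟩ := aux_moll hψ hc h0 hη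
    have h1' : ContDiff ℝ 1 χ := h1.of_le (by exact_mod_cast le_top)
    have h5 := hsub χ h1 h2 h3
    have h6 : ∫ x, ⟪gradient f x, gradient ψ x⟫ ≤
        ∫ x, (⟪gradient f x, gradient χ x⟫ + η * K.indicator (fun x => ‖gradient f x‖) x) := by
      refine integral_mono (hint hψ hc) ((hint h1' h2).add (hKi.const_mul η)) ?_
      intro x
      have h7 : ⟪gradient f x, gradient ψ x - gradient χ x⟫ ≤
          ‖gradient f x‖ * K.indicator (fun _ => η) x :=
        (real_inner_le_norm _ _).trans (mul_le_mul_of_nonneg_left (h4 x) (norm_nonneg _))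
      rw [inner_sub_right] at h7
      have h8 : ‖gradient f x‖ * K.indicator (fun _ => η) x =
          η * K.indicator (fun x => ‖gradient f x‖) x := by
        by_cases hx : x ∈ K
        · simp [hx, mul_comm]
        · simp [hx]
      simp only
      linarith
    rw [integral_add (hint h1' h2) (hKi.const_mul η), integral_const_mul] at h6
    linarith
  by_contra! hcon
  set I := ∫ x, ⟪gradient f x, gradient ψ x⟫ with hI
  have := key (I / (2 * (J + 1))) (by positivity)
  have h9 : I / (2 * (J + 1)) * J ≤ I / 2 := by
    rw [div_mul_eq_mul_div, div_le_div_iff₀ (by positivity) (by positivity)]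
    nlinarith
  linarith

lemma aux_eps {p : ℝ} (hp : 1 < p) {f : E → ℝ} (hf : ContDiff ℝ 1 f) (hf0 : ∀ x, 0 ≤ f x)
    (hsub : WeaklySubharmonic f) {φ : E → ℝ} (hφ : ContDiff ℝ (⊤ : ℕ∞) φ)
    (hφc : HasCompactSupport φ) {ε : ℝ} (hε : 0 < ε) :
    Integrable (fun x => (f x + ε) ^ (p - 2) * φ x ^ 2 * ‖gradient f x‖ ^ 2) ∧
    (p - 1) ^ 2 * ∫ x, (f x + ε) ^ (p - 2) * φ x ^ 2 * ‖gradient f x‖ ^ 2 ≤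
      4 * ∫ x, (f x + ε) ^ p * ‖gradient φ x‖ ^ 2 := by
  have hφ1 : ContDiff ℝ 1 φ := hφ.of_le (by exact_mod_cast le_top)
  have hg0 : ∀ x, 0 < f x + ε := fun x => by linarith [hf0 x]
  have hg : ContDiff ℝ 1 (fun x => f x + ε) := hf.add contDiff_const
  have hfc := aux_grad_cont hf
  have hφg := aux_grad_cont hφ1
  have hpow : ∀ q : ℝ, Continuous (fun x => (f x + ε) ^ q) := fun q =>
    hg.continuous.rpow_const fun x => Or.inl (hg0 x).ne'
  have hA : Integrable (fun x => (f x + ε) ^ (p - 2) * φ x ^ 2 * ‖gradient f x‖ ^ 2) := by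
    refine (((hpow _).mul (hφ1.continuous.pow 2)).mul (hfc.norm.pow 2)).integrable_of_hasCompactSupport
      (hφc.mono ?_)
    intro x hx h
    apply hx
    simp [h]
  have hB : Integrable (fun x => (f x + ε) ^ p * ‖gradient φ x‖ ^ 2) := by
    refine ((hpow _).mul (hφg.norm.pow 2)).integrable_of_hasCompactSupport
      ((aux_grad_supp hφc).mono ?_)
    intro x hx h
    apply hx
    simp [h]
  refine ⟨hA, ?_⟩
  set ψ : E → ℝ := fun x => φ x ^ 2 * (f x + ε) ^ (p - 1) with hψd
  have hψ : ContDiff ℝ 1 ψ := (hφ1.pow 2).mul (hg.rpow_const_of_ne fun x => (hg0 x).ne')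
  have hψc : HasCompactSupport ψ := by
    refine hφc.mono ?_
    intro x hx h
    apply hx
    simp [hψd, h]
  have hψ0 : ∀ x, 0 ≤ ψ x := fun x => mul_nonneg (sq_nonneg _) (rpow_nonneg (hg0 x).le _)
  have hS := aux_sub hf hsub hψ hψc hψ0
  have hI : Integrable (fun x => ⟪gradient f x, gradient ψ x⟫) := by
    refine (hfc.inner (aux_grad_cont hψ)).integrable_of_hasCompactSupport
      ((aux_grad_supp hψc).mono ?_)
    intro x hx h
    apply hx
    simp only [h, inner_zero_right]
  have hin : ∀ x, ⟪gradient f x, gradient ψ x⟫ =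
      2 * φ x * (f x + ε) ^ (p - 1) * ⟪gradient f x, gradient φ x⟫ +
      (p - 1) * φ x ^ 2 * (f x + ε) ^ (p - 2) * ‖gradient f x‖ ^ 2 := by
    intro x
    have h1 := ((hφ1.differentiable one_ne_zero x).hasFDerivAt.pow 2).mul
      (((hf.differentiable one_ne_zero x).hasFDerivAt.add_const ε).rpow_const (p := p - 1)
        (Or.inl (hg0 x).ne'))
    have h2 : fderiv ℝ ψ x = _ := h1.fderiv
    rw [aux_inner, h2, aux_inner f φ, ← real_inner_self_eq_norm_sq, aux_inner f f]
    simp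
    rw [show p - 1 - 1 = p - 2 by ring]
    ring
  have hpt : ∀ x, (p - 1) ^ 2 * ((f x + ε) ^ (p - 2) * φ x ^ 2 * ‖gradient f x‖ ^ 2) -
      4 * ((f x + ε) ^ p * ‖gradient φ x‖ ^ 2) ≤ 2 * (p - 1) * ⟪gradient f x, gradient ψ x⟫ := by
    intro x
    rw [hin]
    have hG := hg0 x
    have e1 : (f x + ε) ^ (p - 1) = (f x + ε) ^ (p - 2) * (f x + ε) := by
      rw [← rpow_add_one hG.ne']; ring_nf
    have e2 : (f x + ε) ^ p = (f x + ε) ^ (p - 2) * (f x + ε) ^ 2 := by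
      rw [← rpow_natCast, ← rpow_add hG]; norm_num
    rw [e1, e2]
    have hsq : 0 ≤ (f x + ε) ^ (p - 2) *
        ‖((p - 1) * φ x) • gradient f x + (2 * (f x + ε)) • gradient φ x‖ ^ 2 :=
      mul_nonneg (rpow_nonneg hG.le _) (sq_nonneg _)
    rw [norm_add_sq_real, norm_smul, norm_smul, mul_pow, mul_pow, real_inner_smul_left,
      real_inner_smul_right, Real.norm_eq_abs, Real.norm_eq_abs, sq_abs, sq_abs] at hsq
    linarith
  have hfin := integral_mono ((hA.const_mul ((p - 1) ^ 2)).sub (hB.const_mul 4))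
    (hI.const_mul (2 * (p - 1))) hpt
  simp only [Pi.sub_apply] at hfin
  rw [integral_sub (hA.const_mul ((p - 1) ^ 2)) (hB.const_mul 4), integral_const_mul,
    integral_const_mul, integral_const_mul] at hfin
  nlinarith

end aux

theorem stmt_5 {n : ℕ} (hn : 1 ≤ n) (p : ℝ) (hp : 1 < p)
    (f : EuclideanSpace ℝ (Fin n) → ℝ)
    (hf : ContDiff ℝ 1 f) (hf0 : ∀ x, 0 ≤ f x)
    (hsub : WeaklySubharmonic f)
    (φ : EuclideanSpace ℝ (Fin n) → ℝ) (hφ : ContDiff ℝ (⊤ : ℕ∞) φ)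
    (hφc : HasCompactSupport φ) (hφ0 : ∀ x, 0 ≤ φ x) :
    (p - 1) ^ 2 * ∫ x, f x ^ (p - 2) * φ x ^ 2 * ‖gradient f x‖ ^ 2 ≤
      4 * ∫ x, f x ^ p * ‖gradient φ x‖ ^ 2 := by
  have hφ1 : ContDiff ℝ 1 φ := hφ.of_le (by exact_mod_cast le_top)
  have hfc := aux_grad_cont hf
  have hφg := aux_grad_cont hφ1
  have hp0 : 0 < p - 1 := by linarith
  have hp2 : 0 < (p - 1) ^ 2 := by positivity
  let e : ℕ → ℝ := fun k => 1 / ((k : ℝ) + 1)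
  have he : ∀ k, 0 < e k := fun k => by positivity
  have het : Tendsto e atTop (nhds 0) := tendsto_one_div_add_atTop_nhds_zero_nat
  have hfe : ∀ x, Tendsto (fun k => f x + e k) atTop (nhds (f x)) := fun x => by
    simpa using (tendsto_const_nhds (x := f x)).add het
  -- gradient vanishes where `f` does
  have hgz : ∀ x, f x = 0 → gradient f x = 0 := by
    intro x hx
    apply aux_grad_zero
    apply IsLocalMin.fderiv_eq_zero
    exact Eventually.of_forall fun y => by rw [hx]; exact hf0 y
  -- convergence of the right-hand side
  have hB : Tendsto (fun k => ∫ x, (f x + e k) ^ p * ‖gradient φ x‖ ^ 2) atTop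
      (nhds (∫ x, f x ^ p * ‖gradient φ x‖ ^ 2)) := by
    have hcp : ∀ c : ℝ, Continuous (fun x => (f x + c) ^ p * ‖gradient φ x‖ ^ 2) := fun c =>
      ((hf.continuous.add continuous_const).rpow_const fun x => Or.inr (by linarith)).mul
        (hφg.norm.pow 2)
    refine tendsto_integral_of_dominated_convergence
      (fun x => (f x + 1) ^ p * ‖gradient φ x‖ ^ 2) ?_ ?_ ?_ ?_
    · exact fun k => (hcp _).aestronglyMeasurable
    · refine (hcp 1).integrable_of_hasCompactSupport ((aux_grad_supp hφc).mono ?_)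
      intro x hx h
      apply hx
      simp [h]
    · intro k
      refine Eventually.of_forall fun x => ?_
      have h1 : 0 ≤ f x + e k := add_nonneg (hf0 x) (he k).le
      rw [Real.norm_of_nonneg (mul_nonneg (rpow_nonneg h1 _) (sq_nonneg _))]
      refine mul_le_mul_of_nonneg_right (rpow_le_rpow h1 ?_ (by linarith)) (sq_nonneg _)
      have : e k ≤ 1 := by
        show 1 / ((k : ℝ) + 1) ≤ 1
        rw [div_le_one (by positivity)]
        linarith [(Nat.cast_nonneg k : (0 : ℝ) ≤ k)]
      linarith
    · refine Eventually.of_forall fun x => ?_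
      exact ((hfe x).rpow_const (Or.inr (by linarith))).mul_const _
  have hA0 : ∀ (c : ℝ), 0 ≤ c → ∀ x, 0 ≤ (f x + c) ^ (p - 2) * φ x ^ 2 * ‖gradient f x‖ ^ 2 :=
    fun c hc x => mul_nonneg (mul_nonneg (rpow_nonneg (add_nonneg (hf0 x) hc) _) (sq_nonneg _))
      (sq_nonneg _)
  have hAt : ∀ x, Tendsto (fun k => (f x + e k) ^ (p - 2) * φ x ^ 2 * ‖gradient f x‖ ^ 2) atTop
      (nhds (f x ^ (p - 2) * φ x ^ 2 * ‖gradient f x‖ ^ 2)) := by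
    intro x
    by_cases hx : f x = 0
    · simp [hgz x hx]
    · exact (((hfe x).rpow_const (Or.inl hx)).mul_const _).mul_const _
  have hAm : ∀ c : ℝ, Measurable (fun x => (f x + c) ^ (p - 2) * φ x ^ 2 * ‖gradient f x‖ ^ 2) := by
    intro c
    exact (((hf.continuous.measurable.add_const c).pow_const _).mul
      (hφ1.continuous.measurable.pow_const 2)).mul (hfc.norm.measurable.pow_const 2)
  have hAm0 := hAm 0
  have hA00 := hA0 0 le_rfl
  simp only [add_zero] at hAm0 hA00
  have hB0 : 0 ≤ ∫ x, f x ^ p * ‖gradient φ x‖ ^ 2 :=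
    integral_nonneg fun x => mul_nonneg (rpow_nonneg (hf0 x) _) (sq_nonneg _)
  -- Fatou
  have hF : ∫⁻ x, ENNReal.ofReal (f x ^ (p - 2) * φ x ^ 2 * ‖gradient f x‖ ^ 2) ≤
      ENNReal.ofReal (4 * (∫ x, f x ^ p * ‖gradient φ x‖ ^ 2) / (p - 1) ^ 2) := by
    have h1 : ∀ x, ENNReal.ofReal (f x ^ (p - 2) * φ x ^ 2 * ‖gradient f x‖ ^ 2) =
        liminf (fun k => ENNReal.ofReal
          ((f x + e k) ^ (p - 2) * φ x ^ 2 * ‖gradient f x‖ ^ 2)) atTop := fun x =>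
      (ENNReal.tendsto_ofReal (hAt x)).liminf_eq.symm
    simp_rw [h1]
    refine (lintegral_liminf_le fun k => (hAm (e k)).ennreal_ofReal).trans ?_
    have h2 : Tendsto (fun k => ENNReal.ofReal
        (4 * (∫ x, (f x + e k) ^ p * ‖gradient φ x‖ ^ 2) / (p - 1) ^ 2)) atTop
        (nhds (ENNReal.ofReal (4 * (∫ x, f x ^ p * ‖gradient φ x‖ ^ 2) / (p - 1) ^ 2))) :=
      ENNReal.tendsto_ofReal ((hB.const_mul 4).div_const _)
    rw [← h2.liminf_eq]
    refine liminf_le_liminf (Eventually.of_forall fun k => ?_)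
    obtain ⟨hi, hle⟩ := aux_eps hp hf hf0 hsub hφ hφc (he k)
    rw [← ofReal_integral_eq_lintegral_ofReal hi (Eventually.of_forall (hA0 _ (he k).le))]
    apply ENNReal.ofReal_le_ofReal
    rw [le_div_iff₀ hp2]
    linarith
  rw [integral_eq_lintegral_of_nonneg_ae (Eventually.of_forall hA00) hAm0.aestronglyMeasurable]
  have := ENNReal.toReal_le_of_le_ofReal (by positivity) hF
  rw [le_div_iff₀ hp2] at this
  linarith
end
end

section
/- Let n ≥ 1, let p > 1 be a real number, and let f : ℝⁿ → ℝ be a continuously differentiable, non-negative, weakly subharmonic function (∫ ⟪∇f, ∇ψ⟫ ≤ 0 for every non-negative smooth compactly supported ψ). Then there is a constant C > 0, depending only on p, such that for every R > 0 the reverse Poincaré inequality ∫_{B_R(0)} f(x)^{p−2} ‖∇f(x)‖² dx ≤ (C/R²) ∫_{B_{2R}(0)} f(x)^p dx holds, where B_r(0) is the Euclidean ball of radius r about the origin and for 1 < p < 2 the integrand on the left is interpreted as 0 at points where f vanishes; one may take C = 4/(p−1)². (This is the reverse Poincaré inequality derived in the proof of the paper's Proposition 2.1 by choosing a cutoff function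 φ ≡ 1 on B_R, φ ≡ 0 off B_{2R}, with ‖∇φ‖ ≤ 1/R.) -/
open MeasureTheory Metric Real Filter Asymptotics RealInnerProductSpace

noncomputable section

open Convolution ContinuousLinearMap in
lemma fderiv_moll {n : ℕ} (ρ : ContDiffBump (0 : EuclideanSpace ℝ (Fin n)))
    (ψ : EuclideanSpace ℝ (Fin n) → ℝ) (hψ : ContDiff ℝ 1 ψ) (hc : HasCompactSupport ψ)
    (x : EuclideanSpace ℝ (Fin n)) :
    fderiv ℝ (ρ.normed volume ⋆[lsmul ℝ ℝ, volume] ψ) x =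
      (ρ.normed volume ⋆[lsmul ℝ ℝ, volume] (fderiv ℝ ψ)) x := by
  have h := (hc.hasFDerivAt_convolution_right (lsmul ℝ ℝ)
    (f := ρ.normed volume) (μ := volume) ρ.continuous_normed.locallyIntegrable hψ x).fderiv
  rw [h]
  simp only [convolution]
  congr 1

lemma continuous_grad {n : ℕ} {f : EuclideanSpace ℝ (Fin n) → ℝ} (hf : ContDiff ℝ 1 f) :
    Continuous (gradient f) := by
  unfold gradient
  exact (LinearIsometryEquiv.continuous _).comp (hf.continuous_fderiv one_ne_zero)

lemma norm_grad {n : ℕ} (f : EuclideanSpace ℝ (Fin n) → ℝ) (x) :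
    ‖gradient f x‖ = ‖fderiv ℝ f x‖ := by
  unfold gradient
  simp

open Convolution ContinuousLinearMap in
lemma weak_C1 {n : ℕ} {f : EuclideanSpace ℝ (Fin n) → ℝ} (hf : ContDiff ℝ 1 f)
    (hsub : WeaklySubharmonic f) (ψ : EuclideanSpace ℝ (Fin n) → ℝ)
    (hψ : ContDiff ℝ 1 ψ) (hc : HasCompactSupport ψ) (h0 : ∀ x, 0 ≤ ψ x) :
    ∫ x, fderiv ℝ ψ x (gradient f x) ≤ 0 := by
  have hV := continuous_grad hf
  have hD : Continuous (fderiv ℝ ψ) := hψ.continuous_fderiv one_ne_zero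
  have hDc : HasCompactSupport (fderiv ℝ ψ) := hc.fderiv ℝ
  obtain ⟨M, hM⟩ : ∃ M, tsupport (fderiv ℝ ψ) ⊆ closedBall 0 M :=
    hDc.isCompact.isBounded.subset_closedBall 0
  set K := closedBall (0 : EuclideanSpace ℝ (Fin n)) (M + 1) with hK
  have hKc : IsCompact K := isCompact_closedBall _ _
  have hz : ∀ y, M < ‖y‖ → fderiv ℝ ψ y = 0 := by
    intro y hy
    apply image_eq_zero_of_notMem_tsupport
    intro h
    have := hM h
    simp at this
    linarith
  have key : ∀ ε > 0, ∫ x, fderiv ℝ ψ x (gradient f x) ≤ ε * ∫ x in K, ‖gradient f x‖ := by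
    intro ε hε
    have huc : UniformContinuous (fderiv ℝ ψ) := hDc.uniformContinuous_of_continuous hD
    obtain ⟨δ, hδ, hd⟩ := Metric.uniformContinuous_iff.1 huc ε hε
    let ρ : ContDiffBump (0 : EuclideanSpace ℝ (Fin n)) :=
      ⟨min δ 1 / 2, min δ 1, by positivity, by have : 0 < min δ 1 := by positivity
                                               linarith⟩
    set g := (ρ.normed volume ⋆[lsmul ℝ ℝ, volume] ψ) with hg
    have hgs : ContDiff ℝ (⊤ : ℕ∞) g :=
      ρ.hasCompactSupport_normed.contDiff_convolution_left _ ρ.contDiff_normed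
        hψ.continuous.locallyIntegrable
    have hgc : HasCompactSupport g := ρ.hasCompactSupport_normed.convolution _ hc
    have hg0 : ∀ x, 0 ≤ g x := fun x =>
      integral_nonneg fun t => mul_nonneg (ρ.nonneg_normed t) (h0 _)
    have h1 := hsub g hgs hgc hg0
    have h1' : ∫ x, fderiv ℝ g x (gradient f x) ≤ 0 := by
      refine le_trans (le_of_eq ?_) h1
      congr 1
      ext x
      rw [inner_gradient_right]; simp
    have hclose : ∀ x, ‖fderiv ℝ ψ x - fderiv ℝ g x‖ ≤ ε := by
      intro x
      rw [hg, fderiv_moll ρ ψ hψ hc x, ← dist_eq_norm, dist_comm]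
      apply ContDiffBump.dist_normed_convolution_le hD.aestronglyMeasurable
      intro y hy
      exact (hd (lt_of_lt_of_le (mem_ball.1 hy) (min_le_left _ _))).le
    have hzero : ∀ x, x ∉ K → fderiv ℝ ψ x - fderiv ℝ g x = 0 := by
      intro x hx
      have hx' : M + 1 < ‖x‖ := by simpa [hK] using hx
      rw [hg, fderiv_moll ρ ψ hψ hc x, ContDiffBump.normed_convolution_eq_right, sub_self]
      intro y hy
      have h2 : dist y x < 1 := lt_of_lt_of_le (mem_ball.1 hy) (min_le_right _ _)
      rw [hz x (by linarith), hz y]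
      have := norm_sub_norm_le x y
      rw [dist_comm, dist_eq_norm] at h2
      linarith
    have i1 : Integrable (fun x => fderiv ℝ ψ x (gradient f x)) := by
      apply (hD.clm_apply hV).integrable_of_hasCompactSupport
      exact hDc.mono fun x hx h => hx (by simp [h])
    have i2 : Integrable (fun x => fderiv ℝ g x (gradient f x)) := by
      apply ((hgs.continuous_fderiv (by simp)).clm_apply hV).integrable_of_hasCompactSupport
      exact (hgc.fderiv ℝ).mono fun x hx h => hx (by simp [h])
    calc ∫ x, fderiv ℝ ψ x (gradient f x)
        = (∫ x, fderiv ℝ g x (gradient f x)) +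
          ∫ x, (fderiv ℝ ψ x - fderiv ℝ g x) (gradient f x) := by
            simp only [sub_apply]
            rw [integral_sub i1 i2]; ring
      _ ≤ ∫ x, (fderiv ℝ ψ x - fderiv ℝ g x) (gradient f x) := by linarith
      _ = ∫ x in K, (fderiv ℝ ψ x - fderiv ℝ g x) (gradient f x) := by
            rw [setIntegral_eq_integral_of_forall_compl_eq_zero]
            intro x hx; rw [hzero x hx]; simp
      _ ≤ ∫ x in K, ε * ‖gradient f x‖ := by
            apply integral_mono
            · exact ((i1.sub i2).integrableOn).congr_fun (fun x _ => by simp)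
                hKc.measurableSet
            · exact (hV.norm.const_mul ε |>.continuousOn.integrableOn_compact hKc)
            · intro x
              refine (le_abs_self _).trans ?_
              exact (le_opNorm _ _).trans (mul_le_mul_of_nonneg_right (hclose x) (norm_nonneg _))
      _ = _ := by rw [integral_const_mul]
  have hI : 0 ≤ ∫ x in K, ‖gradient f x‖ := integral_nonneg fun x => norm_nonneg _
  apply le_of_forall_pos_le_add
  intro η hη
  have h := key (η / ((∫ x in K, ‖gradient f x‖) + 1)) (by positivity)
  refine h.trans ?_
  rw [zero_add, div_mul_eq_mul_div, div_le_iff₀ (by positivity)]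
  nlinarith

open Convolution ContinuousLinearMap in
lemma exists_cutoff (n : ℕ) (R κ : ℝ) (hκ : 0 < κ) (hκR : κ < R) :
    ∃ φ : EuclideanSpace ℝ (Fin n) → ℝ, ContDiff ℝ (⊤ : ℕ∞) φ ∧ HasCompactSupport φ ∧
      (∀ x ∈ ball 0 R, φ x = 1) ∧ (∀ x, ‖fderiv ℝ φ x‖ ≤ 1 / κ) ∧
      (∀ x, x ∉ ball 0 (2 * R) → fderiv ℝ φ x = 0) := by
  set ε := (R - κ) / 3 with hε
  have hεp : 0 < ε := by rw [hε]; linarith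
  have hR : R = κ + 3 * ε := by rw [hε]; ring
  let φ₀ : EuclideanSpace ℝ (Fin n) → ℝ := fun x => max 0 (min 1 ((2 * R - 2 * ε - ‖x‖) / κ))
  have hφ₀ : Continuous φ₀ := by unfold φ₀; fun_prop
  have hlip : ∀ x y, |φ₀ x - φ₀ y| ≤ 1 / κ * ‖x - y‖ := by
    intro x y
    have h1 : |φ₀ x - φ₀ y| ≤ |(2 * R - 2 * ε - ‖x‖) / κ - (2 * R - 2 * ε - ‖y‖) / κ| := by
      have h2 := abs_max_sub_max_le_max 0 (min 1 ((2 * R - 2 * ε - ‖x‖) / κ)) 0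
        (min 1 ((2 * R - 2 * ε - ‖y‖) / κ))
      have h3 := abs_min_sub_min_le_max 1 ((2 * R - 2 * ε - ‖x‖) / κ) 1
        ((2 * R - 2 * ε - ‖y‖) / κ)
      simp only [sub_self, abs_zero, abs_nonneg, max_eq_right] at h2 h3
      exact h2.trans h3
    refine h1.trans ?_
    rw [← sub_div, abs_div, abs_of_pos hκ, div_eq_inv_mul, one_div]
    gcongr
    rw [show 2 * R - 2 * ε - ‖x‖ - (2 * R - 2 * ε - ‖y‖) = ‖y‖ - ‖x‖ by ring, norm_sub_rev]
    exact abs_norm_sub_norm_le _ _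
  have hc₀ : ∀ x, 2 * R - 2 * ε ≤ ‖x‖ → φ₀ x = 0 := by
    intro x hx
    apply max_eq_left
    apply (min_le_right _ _).trans
    apply div_nonpos_of_nonpos_of_nonneg <;> linarith
  have h1₀ : ∀ x, ‖x‖ ≤ R + ε → φ₀ x = 1 := by
    intro x hx
    have : 1 ≤ (2 * R - 2 * ε - ‖x‖) / κ := by
      rw [le_div_iff₀ hκ]; linarith
    simp [φ₀, min_eq_left this]
  let ρ : ContDiffBump (0 : EuclideanSpace ℝ (Fin n)) := ⟨ε / 2, ε, by positivity, by linarith⟩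
  set φ := (ρ.normed volume ⋆[lsmul ℝ ℝ, volume] φ₀) with hφ
  have hφs : ContDiff ℝ (⊤ : ℕ∞) φ :=
      ρ.hasCompactSupport_normed.contDiff_convolution_left _ ρ.contDiff_normed
        hφ₀.locallyIntegrable
  have hφz : ∀ x, 2 * R - ε ≤ ‖x‖ → φ x = 0 := by
    intro x hx
    rw [hφ, ContDiffBump.normed_convolution_eq_right]
    · exact hc₀ x (by linarith)
    · intro y hy
      have h2 : dist y x < ε := mem_ball.1 hy
      have := norm_sub_norm_le x y
      rw [dist_comm, dist_eq_norm] at h2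
      rw [hc₀ x (by linarith), hc₀ y (by linarith)]
  have hint : ∀ x, Integrable (fun t => ρ.normed volume t * φ₀ (x - t)) := by
    intro x
    have : Continuous (fun t => ρ.normed volume t * φ₀ (x - t)) :=
      ρ.continuous_normed.mul (hφ₀.comp (continuous_const.sub continuous_id))
    exact this.integrable_of_hasCompactSupport (ρ.hasCompactSupport_normed.mul_right)
  refine ⟨φ, hφs, ?_, ?_, ?_, ?_⟩
  · apply HasCompactSupport.intro (isCompact_closedBall (0 : EuclideanSpace ℝ (Fin n)) (2 * R))
    intro x hx
    simp at hx
    exact hφz x (by linarith)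
  · intro x hx
    have hx' : ‖x‖ < R := by simpa using hx
    rw [hφ, ContDiffBump.normed_convolution_eq_right]
    · exact h1₀ x (by linarith)
    · intro y hy
      have h2 : dist y x < ε := mem_ball.1 hy
      have := norm_sub_norm_le y x
      rw [dist_eq_norm] at h2
      rw [h1₀ x (by linarith), h1₀ y (by linarith)]
  · intro x
    have hL : LipschitzWith ⟨1 / κ, by positivity⟩ φ := by
      apply LipschitzWith.of_dist_le_mul
      intro x y
      rw [Real.dist_eq, dist_eq_norm]
      have e : ∀ z, φ z = ∫ t, ρ.normed volume t * φ₀ (z - t) := fun z => rfl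
      rw [e, e, ← integral_sub (hint x) (hint y)]
      calc |∫ t, (ρ.normed volume t * φ₀ (x - t) - ρ.normed volume t * φ₀ (y - t))|
          ≤ ∫ t, ρ.normed volume t * (1 / κ * ‖x - y‖) := by
            rw [← Real.norm_eq_abs]
            apply norm_integral_le_of_norm_le
            · exact ρ.integrable_normed.mul_const _
            · refine Eventually.of_forall fun t => ?_
              rw [← mul_sub, norm_mul, Real.norm_of_nonneg (ρ.nonneg_normed t)]
              have := hlip (x - t) (y - t)
              rw [sub_sub_sub_cancel_right] at this
              exact mul_le_mul_of_nonneg_left this (ρ.nonneg_normed t)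
        _ = 1 / κ * ‖x - y‖ := by rw [integral_mul_const, ρ.integral_normed, one_mul]
    exact norm_fderiv_le_of_lipschitz ℝ hL
  · intro x hx
    have hx' : 2 * R ≤ ‖x‖ := by simpa using hx
    have : φ =ᶠ[nhds x] fun _ => 0 := by
      have : {y : EuclideanSpace ℝ (Fin n) | 2 * R - ε < ‖y‖} ∈ nhds x :=
        (isOpen_lt continuous_const continuous_norm).mem_nhds (by simp; linarith)
      filter_upwards [this] with y hy using hφz y (le_of_lt hy)
    rw [this.fderiv_eq]
    simp

lemma core {n : ℕ} (p : ℝ) (hp : 1 < p) (u : EuclideanSpace ℝ (Fin n) → ℝ)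
    (hu : ContDiff ℝ 1 u) (hpos : ∀ x, 0 < u x)
    (hweak : ∀ ψ : EuclideanSpace ℝ (Fin n) → ℝ, ContDiff ℝ 1 ψ → HasCompactSupport ψ →
      (∀ x, 0 ≤ ψ x) → ∫ x, fderiv ℝ ψ x (gradient u x) ≤ 0)
    (φ : EuclideanSpace ℝ (Fin n) → ℝ) (hφ : ContDiff ℝ 1 φ) (hc : HasCompactSupport φ) :
    ∫ x, φ x ^ 2 * (u x ^ (p - 2) * ‖gradient u x‖ ^ 2) ≤
      4 / (p - 1) ^ 2 * ∫ x, u x ^ p * ‖fderiv ℝ φ x‖ ^ 2 := by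
  have hV := continuous_grad hu
  have hD : Continuous (fderiv ℝ φ) := hφ.continuous_fderiv one_ne_zero
  have hcont : ∀ q : ℝ, Continuous (fun x => u x ^ q) := fun q =>
    hu.continuous.rpow_const fun x => Or.inl (hpos x).ne'
  have h := hweak (fun x => φ x ^ 2 * u x ^ (p - 1))
    ((hφ.pow 2).mul (hu.rpow_const_of_ne fun x => (hpos x).ne'))
    (hc.mono fun x hx h => hx (by simp [h])) (fun x => by have := (hpos x).le; positivity)
  have hfd : ∀ x, fderiv ℝ (fun x => φ x ^ 2 * u x ^ (p - 1)) x (gradient u x) =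
      (p - 1) * (φ x ^ 2 * (u x ^ (p - 2) * ‖gradient u x‖ ^ 2)) +
      2 * φ x * u x ^ (p - 1) * fderiv ℝ φ x (gradient u x) := by
    intro x
    have d1 : HasFDerivAt φ (fderiv ℝ φ x) x := (hφ.differentiable one_ne_zero x).hasFDerivAt
    have d2 : HasFDerivAt u (fderiv ℝ u x) x := (hu.differentiable one_ne_zero x).hasFDerivAt
    have d := (d1.pow 2).mul (d2.rpow_const (p := p - 1) (Or.inl (hpos x).ne'))
    have e : fderiv ℝ (fun x => φ x ^ 2 * u x ^ (p - 1)) x = _ := d.fderiv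
    rw [e]
    have e2 : fderiv ℝ u x (gradient u x) = ‖gradient u x‖ ^ 2 := by
      rw [← inner_gradient_left, real_inner_self_eq_norm_sq]
    simp [e2, show p - 1 - 1 = p - 2 by ring]
    ring
  simp_rw [hfd] at h
  have iA : Integrable (fun x => φ x ^ 2 * (u x ^ (p - 2) * ‖gradient u x‖ ^ 2)) := by
    apply Continuous.integrable_of_hasCompactSupport
    · exact (hφ.continuous.pow 2).mul ((hcont _).mul (hV.norm.pow 2))
    · exact hc.mono fun x hx h => hx (by simp [h])
  have iB : Integrable (fun x => u x ^ p * ‖fderiv ℝ φ x‖ ^ 2) := by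
    apply Continuous.integrable_of_hasCompactSupport
    · exact (hcont _).mul (hD.norm.pow 2)
    · exact (hc.fderiv ℝ).mono fun x hx h => hx (by simp [h])
  have iX : Integrable (fun x => 2 * φ x * u x ^ (p - 1) * fderiv ℝ φ x (gradient u x)) := by
    apply Continuous.integrable_of_hasCompactSupport
    · exact ((continuous_const.mul hφ.continuous).mul (hcont _)).mul (hD.clm_apply hV)
    · exact hc.mono fun x hx h => hx (by simp [h])
  rw [integral_add (iA.const_mul _) iX, integral_const_mul] at h
  have hp1 : 0 < p - 1 := by linarith
  have hpt : ∀ x, -(2 * φ x * u x ^ (p - 1) * fderiv ℝ φ x (gradient u x)) ≤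
      (p - 1) / 2 * (φ x ^ 2 * (u x ^ (p - 2) * ‖gradient u x‖ ^ 2)) +
      2 / (p - 1) * (u x ^ p * ‖fderiv ℝ φ x‖ ^ 2) := by
    intro x
    set s := u x ^ (p - 2) with hs
    have hs0 : 0 ≤ s := Real.rpow_nonneg (hpos x).le _
    have e1 : u x ^ (p - 1) = s * u x := by
      rw [hs, ← Real.rpow_add_one (hpos x).ne']; ring_nf
    have e2 : u x ^ p = s * u x * u x := by
      rw [hs, ← Real.rpow_add_one (hpos x).ne', ← Real.rpow_add_one (hpos x).ne']; ring_nf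
    rw [e1, e2]
    have hop := ContinuousLinearMap.le_opNorm (fderiv ℝ φ x) (gradient u x)
    rw [Real.norm_eq_abs] at hop
    set a := |φ x| * ‖gradient u x‖
    set b := u x * ‖fderiv ℝ φ x‖
    have h1 : -(2 * φ x * (s * u x) * fderiv ℝ φ x (gradient u x)) ≤ s * (2 * (a * b)) := by
      refine (neg_le_abs _).trans ?_
      rw [abs_mul, abs_mul, abs_mul, abs_of_nonneg (mul_nonneg hs0 (hpos x).le),
        abs_of_pos (by norm_num : (0:ℝ) < 2)]
      calc _ ≤ 2 * |φ x| * (s * u x) * (‖fderiv ℝ φ x‖ * ‖gradient u x‖) := by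
            have := (hpos x).le
            gcongr
        _ = _ := by simp only [a, b]; ring
    have h2 : 2 * (a * b) ≤ (p - 1) / 2 * a ^ 2 + 2 / (p - 1) * b ^ 2 := by
      have : (p - 1) / 2 * a ^ 2 + 2 / (p - 1) * b ^ 2 - 2 * (a * b)
        = ((p - 1) * a - 2 * b) ^ 2 / (2 * (p - 1)) := by field_simp; ring
      have h3 : 0 ≤ ((p - 1) * a - 2 * b) ^ 2 / (2 * (p - 1)) := by positivity
      linarith
    refine h1.trans ((mul_le_mul_of_nonneg_left h2 hs0).trans (le_of_eq ?_))
    simp only [a, b, mul_pow, sq_abs]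
    ring
  have h2 := integral_mono iX.neg ((iA.const_mul ((p-1)/2)).add (iB.const_mul (2/(p-1)))) hpt
  simp only [Pi.neg_apply, Pi.add_apply] at h2
  rw [integral_neg, integral_add (iA.const_mul _) (iB.const_mul _), integral_const_mul,
    integral_const_mul] at h2
  set A := ∫ x, φ x ^ 2 * (u x ^ (p - 2) * ‖gradient u x‖ ^ 2)
  set B := ∫ x, u x ^ p * ‖fderiv ℝ φ x‖ ^ 2
  have h3 : (p - 1) / 2 * A ≤ 2 / (p - 1) * B := by linarith
  have h4 := mul_le_mul_of_nonneg_left h3 (by positivity : 0 ≤ 2 / (p - 1))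
  calc A = 2 / (p - 1) * ((p - 1) / 2 * A) := by field_simp
    _ ≤ _ := h4
    _ = _ := by field_simp; ring

lemma grad_add_const {n : ℕ} (f : EuclideanSpace ℝ (Fin n) → ℝ) (δ : ℝ) :
    gradient (fun x => f x + δ) = gradient f := by
  ext1 x
  unfold gradient
  rw [fderiv_add_const]

lemma step_delta {n : ℕ} (p : ℝ) (hp : 1 < p) (f : EuclideanSpace ℝ (Fin n) → ℝ)
    (hf : ContDiff ℝ 1 f) (hf0 : ∀ x, 0 ≤ f x) (hsub : WeaklySubharmonic f)
    (δ : ℝ) (hδ : 0 < δ) (R : ℝ) (hR : 0 < R) :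
    ∫ x in ball (0 : EuclideanSpace ℝ (Fin n)) R, (f x + δ) ^ (p - 2) * ‖gradient f x‖ ^ 2 ≤
      4 / (p - 1) ^ 2 / R ^ 2 *
        ∫ x in ball (0 : EuclideanSpace ℝ (Fin n)) (2 * R), (f x + δ) ^ p := by
  have hV := continuous_grad hf
  have hpos : ∀ x, 0 < f x + δ := fun x => by linarith [hf0 x]
  have hu : ContDiff ℝ 1 (fun x => f x + δ) := hf.add contDiff_const
  have hcont : ∀ q : ℝ, Continuous (fun x => (f x + δ) ^ q) := fun q =>
    hu.continuous.rpow_const fun x => Or.inl (hpos x).ne'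
  have iP : IntegrableOn (fun x => (f x + δ) ^ p)
      (ball (0 : EuclideanSpace ℝ (Fin n)) (2 * R)) :=
    ((hcont p).continuousOn.integrableOn_compact (isCompact_closedBall 0 (2 * R))).mono_set
      ball_subset_closedBall
  have hk : ∀ κ, 0 < κ → κ < R →
      ∫ x in ball (0 : EuclideanSpace ℝ (Fin n)) R, (f x + δ) ^ (p - 2) * ‖gradient f x‖ ^ 2 ≤
      4 / (p - 1) ^ 2 / κ ^ 2 *
        ∫ x in ball (0 : EuclideanSpace ℝ (Fin n)) (2 * R), (f x + δ) ^ p := by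
    intro κ hκ hκR
    obtain ⟨φ, hφs, hφc, hφ1, hφL, hφz⟩ := exists_cutoff n R κ hκ hκR
    have hφ : ContDiff ℝ 1 φ := hφs.of_le (by simp)
    have hD : Continuous (fderiv ℝ φ) := hφ.continuous_fderiv one_ne_zero
    have h := core p hp (fun x => f x + δ) hu hpos (by
      rw [grad_add_const]; exact weak_C1 hf hsub) φ hφ hφc
    rw [grad_add_const] at h
    have hnn : ∀ x, 0 ≤ φ x ^ 2 * ((f x + δ) ^ (p - 2) * ‖gradient f x‖ ^ 2) := fun x => by
      have := (hpos x).le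
      positivity
    have iA : Integrable (fun x => φ x ^ 2 * ((f x + δ) ^ (p - 2) * ‖gradient f x‖ ^ 2)) := by
      apply Continuous.integrable_of_hasCompactSupport
      · exact (hφ.continuous.pow 2).mul ((hcont _).mul (hV.norm.pow 2))
      · exact hφc.mono fun x hx h => hx (by simp [h])
    have iB : Integrable (fun x => (f x + δ) ^ p * ‖fderiv ℝ φ x‖ ^ 2) := by
      apply Continuous.integrable_of_hasCompactSupport
      · exact (hcont _).mul (hD.norm.pow 2)
      · exact (hφc.fderiv ℝ).mono fun x hx h => hx (by simp [h])
    have h1 : ∫ x in ball (0 : EuclideanSpace ℝ (Fin n)) R,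
        (f x + δ) ^ (p - 2) * ‖gradient f x‖ ^ 2 ≤
        ∫ x, φ x ^ 2 * ((f x + δ) ^ (p - 2) * ‖gradient f x‖ ^ 2) := by
      refine le_trans (le_of_eq ?_)
        (setIntegral_le_integral (s := ball 0 R) iA (Eventually.of_forall hnn))
      apply setIntegral_congr_fun measurableSet_ball
      intro x hx
      simp only [hφ1 x hx]
      ring
    have h2 : ∫ x, (f x + δ) ^ p * ‖fderiv ℝ φ x‖ ^ 2 ≤
        1 / κ ^ 2 * ∫ x in ball (0 : EuclideanSpace ℝ (Fin n)) (2 * R), (f x + δ) ^ p := by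
      rw [← setIntegral_eq_integral_of_forall_compl_eq_zero
        (s := ball (0 : EuclideanSpace ℝ (Fin n)) (2 * R))
        (fun x hx => by rw [hφz x hx]; simp), ← integral_const_mul]
      apply integral_mono iB.integrableOn (iP.const_mul _)
      intro x
      have h3 : ‖fderiv ℝ φ x‖ ^ 2 ≤ 1 / κ ^ 2 := by
        have := pow_le_pow_left₀ (norm_nonneg _) (hφL x) 2
        rwa [one_div_pow] at this
      have h4 := mul_le_mul_of_nonneg_left h3 (Real.rpow_nonneg (hpos x).le p)
      simp only
      linarith
    refine h1.trans (h.trans ((mul_le_mul_of_nonneg_left h2 (by positivity)).trans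
      (le_of_eq ?_)))
    ring
  have ht : Tendsto (fun κ : ℝ => 4 / (p - 1) ^ 2 / κ ^ 2 *
        ∫ x in ball (0 : EuclideanSpace ℝ (Fin n)) (2 * R), (f x + δ) ^ p)
      (nhdsWithin R (Set.Iio R)) (nhds (4 / (p - 1) ^ 2 / R ^ 2 *
        ∫ x in ball (0 : EuclideanSpace ℝ (Fin n)) (2 * R), (f x + δ) ^ p)) := by
    apply Tendsto.mono_left _ nhdsWithin_le_nhds
    apply Tendsto.mul_const
    exact tendsto_const_nhds.div ((continuous_pow 2).tendsto R) (by positivity)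
  apply ge_of_tendsto ht
  filter_upwards [self_mem_nhdsWithin, mem_nhdsWithin_of_mem_nhds (lt_mem_nhds hR)] with κ h1 h2
  exact hk κ h2 h1

theorem stmt_6 {n : ℕ} (hn : 1 ≤ n) (p : ℝ) (hp : 1 < p)
    (f : EuclideanSpace ℝ (Fin n) → ℝ)
    (hf : ContDiff ℝ 1 f) (hf0 : ∀ x, 0 ≤ f x)
    (hsub : WeaklySubharmonic f) :
    ∃ C : ℝ, 0 < C ∧ C = 4 / (p - 1) ^ 2 ∧ ∀ R : ℝ, 0 < R →
      ∫ x in ball (0 : EuclideanSpace ℝ (Fin n)) R, f x ^ (p - 2) * ‖gradient f x‖ ^ 2 ≤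
        C / R ^ 2 * ∫ x in ball (0 : EuclideanSpace ℝ (Fin n)) (2 * R), f x ^ p := by
  have hp1 : 0 < p - 1 := by linarith
  refine ⟨4 / (p - 1) ^ 2, by positivity, rfl, ?_⟩
  intro R hR
  have hV := continuous_grad hf
  let d : ℕ → ℝ := fun k => 1 / ((k : ℝ) + 1)
  have hd : ∀ k, 0 < d k := fun k => by simp only [d]; positivity
  have hd1 : ∀ k, d k ≤ 1 := fun k => by
    simp only [d]
    rw [div_le_one (by positivity)]
    have : (0 : ℝ) ≤ k := Nat.cast_nonneg k
    linarith
  have hdt : Tendsto d atTop (nhds 0) := tendsto_one_div_add_atTop_nhds_zero_nat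
  have hcont : ∀ k (q : ℝ), Continuous (fun x => (f x + d k) ^ q) := fun k q =>
    (hf.continuous.add continuous_const).rpow_const fun x =>
      Or.inl (add_pos_of_nonneg_of_pos (hf0 x) (hd k)).ne'
  have hadd : ∀ x, Tendsto (fun k => f x + d k) atTop (nhds (f x)) := fun x => by
    simpa using tendsto_const_nhds.add hdt
  -- convergence of the right-hand sides
  have hRHS : Tendsto (fun k => ∫ x in ball (0 : EuclideanSpace ℝ (Fin n)) (2 * R),
      (f x + d k) ^ p) atTop
      (nhds (∫ x in ball (0 : EuclideanSpace ℝ (Fin n)) (2 * R), f x ^ p)) := by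
    apply tendsto_integral_of_dominated_convergence (fun x => (f x + 1) ^ p)
    · intro k
      exact (hcont k p).aestronglyMeasurable
    · have : Continuous (fun x => (f x + 1) ^ p) :=
        (hf.continuous.add continuous_const).rpow_const fun x => Or.inr (by linarith)
      exact (this.continuousOn.integrableOn_compact (isCompact_closedBall 0 (2 * R))).mono_set
        ball_subset_closedBall
    · intro k
      refine Eventually.of_forall fun x => ?_
      have h1 := hf0 x
      have h2 := hd k
      rw [Real.norm_of_nonneg (by positivity)]
      exact Real.rpow_le_rpow (by positivity) (by linarith [hd1 k]) (by linarith)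
    · refine Eventually.of_forall fun x => ?_
      exact (hadd x).rpow_const (Or.inr (by linarith))
  -- pointwise convergence on the left
  have hLHS : ∀ x, Tendsto (fun k => (f x + d k) ^ (p - 2) * ‖gradient f x‖ ^ 2) atTop
      (nhds (f x ^ (p - 2) * ‖gradient f x‖ ^ 2)) := by
    intro x
    by_cases hx : f x = 0
    · have hmin : IsLocalMin f x := Eventually.of_forall fun y => by rw [hx]; exact hf0 y
      have : gradient f x = 0 := by
        unfold gradient
        rw [hmin.fderiv_eq_zero]; simp
      simp [this]
    · exact ((hadd x).rpow_const (Or.inl hx)).mul_const _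
  have hmeas : Measurable (fun x => f x ^ (p - 2) * ‖gradient f x‖ ^ 2) :=
    (hf.continuous.measurable.pow_const _).mul (hV.norm.pow 2).measurable
  have hCk : ∀ k, Continuous (fun x => (f x + d k) ^ (p - 2) * ‖gradient f x‖ ^ 2) := fun k =>
    (hcont k _).mul (hV.norm.pow 2)
  rw [integral_eq_lintegral_of_nonneg_ae
    (Eventually.of_forall fun x => mul_nonneg (Real.rpow_nonneg (hf0 x) _) (sq_nonneg _))
    hmeas.aestronglyMeasurable]
  apply ENNReal.toReal_le_of_le_ofReal
  · exact mul_nonneg (by positivity) (integral_nonneg fun x => Real.rpow_nonneg (hf0 x) _)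
  have ht : Tendsto (fun k => ENNReal.ofReal (4 / (p - 1) ^ 2 / R ^ 2 *
      ∫ x in ball (0 : EuclideanSpace ℝ (Fin n)) (2 * R), (f x + d k) ^ p)) atTop
      (nhds (ENNReal.ofReal (4 / (p - 1) ^ 2 / R ^ 2 *
      ∫ x in ball (0 : EuclideanSpace ℝ (Fin n)) (2 * R), f x ^ p))) :=
    ENNReal.tendsto_ofReal (hRHS.const_mul _)
  calc ∫⁻ x in ball (0 : EuclideanSpace ℝ (Fin n)) R,
        ENNReal.ofReal (f x ^ (p - 2) * ‖gradient f x‖ ^ 2)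
      = ∫⁻ x in ball (0 : EuclideanSpace ℝ (Fin n)) R, liminf (fun k =>
          ENNReal.ofReal ((f x + d k) ^ (p - 2) * ‖gradient f x‖ ^ 2)) atTop := by
        congr 1
        ext x
        exact (ENNReal.tendsto_ofReal (hLHS x)).liminf_eq.symm
    _ ≤ liminf (fun k => ∫⁻ x in ball (0 : EuclideanSpace ℝ (Fin n)) R,
          ENNReal.ofReal ((f x + d k) ^ (p - 2) * ‖gradient f x‖ ^ 2)) atTop :=
        lintegral_liminf_le fun k => (hCk k).measurable.ennreal_ofReal
    _ ≤ liminf (fun k => ENNReal.ofReal (4 / (p - 1) ^ 2 / R ^ 2 *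
      ∫ x in ball (0 : EuclideanSpace ℝ (Fin n)) (2 * R), (f x + d k) ^ p)) atTop := by
        refine liminf_le_liminf (Eventually.of_forall fun k => ?_)
        rw [← ofReal_integral_eq_lintegral_ofReal]
        · exact ENNReal.ofReal_le_ofReal (step_delta p hp f hf hf0 hsub (d k) (hd k) R hR)
        · exact ((hCk k).continuousOn.integrableOn_compact (isCompact_closedBall 0 R)).mono_set
            ball_subset_closedBall
        · refine Eventually.of_forall fun x => mul_nonneg (Real.rpow_nonneg ?_ _) (sq_nonneg _)
          exact add_nonneg (hf0 x) (hd k).le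
    _ = _ := ht.liminf_eq
end
end

section
/- Let n, m ≥ 1 and let u : ℝⁿ → ℝᵐ be a smooth map. Let Q = u(0), define the pull-back tensor at the origin by π_{ij}(0) = ⟪∂_i u(0), ∂_j u(0)⟫ and |π|²(0) = Σ_{i,j} π_{ij}(0)², and let ω_n denote the Lebesgue volume of the unit ball in ℝⁿ. Then, as σ → 0⁺, ∫_{B_σ(0)} ‖∇( y ↦ ‖u(y) − Q‖² )(x)‖² dx = (4 ω_n/(n+2)) · |π|²(0) · σ^{n+2} + o(σ^{n+2}), where B_σ(0) is the Euclidean ball of radius σ about the origin and ∇ denotes the gradient on ℝⁿ. (This is the instance of the paper's Lemma 3.1 in which the domain is Euclidean space ℝⁿ, the CAT(1) target is Euclidean space ℝᵐ with d(u,Q) = ‖u − Q‖, and the base point of the ball is the origin with Q = u(0).) -/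
open MeasureTheory Metric Real Filter Asymptotics Topology RealInnerProductSpace

noncomputable section

/-- The partial derivative in the `i`-th coordinate direction. -/
noncomputable def pd {n : ℕ} {F : Type*} [NormedAddCommGroup F] [NormedSpace ℝ F]
    (i : Fin n) (u : EuclideanSpace ℝ (Fin n) → F) (x : EuclideanSpace ℝ (Fin n)) : F :=
  fderiv ℝ u x (EuclideanSpace.single i 1)

/-- The Laplacian: the sum of second partial derivatives. -/
noncomputable def lap {n : ℕ} (u : EuclideanSpace ℝ (Fin n) → ℝ)
    (x : EuclideanSpace ℝ (Fin n)) : ℝ :=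
  ∑ i : Fin n, pd i (pd i u) x

/-- A function is harmonic if it is smooth and its Laplacian vanishes everywhere. -/
def Harmonic {n : ℕ} (u : EuclideanSpace ℝ (Fin n) → ℝ) : Prop :=
  ContDiff ℝ (⊤ : ℕ∞) u ∧ ∀ x, lap u x = 0

/-- The pull-back tensor `π_{ij}(x) = ⟪∂ᵢu(x), ∂ⱼu(x)⟫`. -/
noncomputable def pullback {n m : ℕ} (u : EuclideanSpace ℝ (Fin n) → EuclideanSpace ℝ (Fin m))
    (i j : Fin n) (x : EuclideanSpace ℝ (Fin n)) : ℝ :=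
  ⟪pd i u x, pd j u x⟫

/-- The energy density `|∇u|²(x) = ∑ᵢ ‖∂ᵢu(x)‖²`. -/
noncomputable def energyDensity {n m : ℕ}
    (u : EuclideanSpace ℝ (Fin n) → EuclideanSpace ℝ (Fin m))
    (x : EuclideanSpace ℝ (Fin n)) : ℝ :=
  ∑ i : Fin n, ‖pd i u x‖ ^ 2

/-- The squared norm of the pull-back tensor, `|π|²(x) = ∑ᵢⱼ π_{ij}(x)²`. -/
noncomputable def pullbackNormSq {n m : ℕ}
    (u : EuclideanSpace ℝ (Fin n) → EuclideanSpace ℝ (Fin m))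
    (x : EuclideanSpace ℝ (Fin n)) : ℝ :=
  ∑ i : Fin n, ∑ j : Fin n, (pullback u i j x) ^ 2

lemma cont_int {n : ℕ} {f : EuclideanSpace ℝ (Fin n) → ℝ} (hf : Continuous f) (σ : ℝ) :
    IntegrableOn f (ball 0 σ) volume :=
  (hf.continuousOn.integrableOn_compact (isCompact_closedBall 0 σ)).mono_set ball_subset_closedBall

lemma isom_int {n : ℕ} (e : EuclideanSpace ℝ (Fin n) ≃ₗᵢ[ℝ] EuclideanSpace ℝ (Fin n))
    (g : EuclideanSpace ℝ (Fin n) → ℝ) (σ : ℝ) :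
    ∫ x in ball (0 : EuclideanSpace ℝ (Fin n)) σ, g (e x) =
      ∫ x in ball (0 : EuclideanSpace ℝ (Fin n)) σ, g x := by
  have h := e.measurePreserving.setIntegral_preimage_emb
    e.toHomeomorph.measurableEmbedding g (ball 0 σ)
  have h2 : (e ⁻¹' ball (0 : EuclideanSpace ℝ (Fin n)) σ) = ball 0 σ := by
    ext x; simp
  rw [h2] at h
  exact h

lemma off_diag {n : ℕ} (j k : Fin n) (hjk : j ≠ k) (σ : ℝ) :
    ∫ x in ball (0 : EuclideanSpace ℝ (Fin n)) σ, x j * x k = 0 := by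
  have h := isom_int (LinearIsometryEquiv.piLpCongrRight 2
    (fun i : Fin n => if i = j then LinearIsometryEquiv.neg ℝ else .refl ℝ ℝ))
    (fun x => x j * x k) σ
  simp only [LinearIsometryEquiv.piLpCongrRight_apply, if_true, hjk.symm, if_false,
    LinearIsometryEquiv.coe_neg, LinearIsometryEquiv.coe_refl, id, neg_mul, integral_neg] at h
  linarith

lemma diag_eq {n : ℕ} (j k : Fin n) (σ : ℝ) :
    ∫ x in ball (0 : EuclideanSpace ℝ (Fin n)) σ, x j * x j =
    ∫ x in ball (0 : EuclideanSpace ℝ (Fin n)) σ, x k * x k := by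
  have h := isom_int (LinearIsometryEquiv.piLpCongrLeft 2 ℝ ℝ (Equiv.swap j k))
    (fun x => x j * x j) σ
  rw [← h]
  simp [LinearIsometryEquiv.piLpCongrLeft_apply, Equiv.piCongrLeft']

lemma norm_int {n : ℕ} (hn : 1 ≤ n) (σ : ℝ) (hσ : 0 < σ) :
    ∫ x in ball (0 : EuclideanSpace ℝ (Fin n)) σ, ‖x‖ ^ 2 =
      n * (volume (ball (0 : EuclideanSpace ℝ (Fin n)) 1)).toReal * (σ ^ (n + 2) / (n + 2)) := by
  have : Nonempty (Fin n) := ⟨⟨0, hn⟩⟩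
  have h := integral_fun_norm_addHaar (volume : Measure (EuclideanSpace ℝ (Fin n)))
    (Set.indicator (Set.Iio σ) (fun r : ℝ => r ^ 2))
  have h1 : ∫ x in ball (0 : EuclideanSpace ℝ (Fin n)) σ, ‖x‖ ^ 2 =
      ∫ x : EuclideanSpace ℝ (Fin n), Set.indicator (Set.Iio σ) (fun r : ℝ => r ^ 2) ‖x‖ := by
    rw [← integral_indicator measurableSet_ball]
    congr 1; ext x
    by_cases hx : ‖x‖ < σ <;> simp [Set.indicator, hx]
  rw [h1, h]
  have h2 : ∫ y in Set.Ioi (0 : ℝ), y ^ (n - 1) • Set.indicator (Set.Iio σ) (fun r : ℝ => r ^ 2) y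
      = σ ^ (n + 2) / (n + 2) := by
    have : ∀ y : ℝ, y ^ (n - 1) • Set.indicator (Set.Iio σ) (fun r : ℝ => r ^ 2) y =
        Set.indicator (Set.Iio σ) (fun r : ℝ => r ^ (n + 1)) y := by
      intro y
      by_cases hy : y < σ
      · simp only [Set.indicator, Set.mem_Iio, hy, if_true, smul_eq_mul, ← pow_add]
        congr 1; omega
      · simp [Set.indicator, hy]
    simp_rw [this]
    rw [setIntegral_indicator measurableSet_Iio, Set.Ioi_inter_Iio, ← integral_Ioc_eq_integral_Ioo,
      ← intervalIntegral.integral_of_le hσ.le, integral_pow]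
    push_cast
    simp; ring
  simp only [finrank_euclideanSpace, Fintype.card_fin]
  rw [h2]
  simp [Measure.real]; ring

lemma second_moment {n : ℕ} (hn : 1 ≤ n) (σ : ℝ) (hσ : 0 < σ) (j k : Fin n) :
    ∫ x in ball (0 : EuclideanSpace ℝ (Fin n)) σ, x j * x k = if j = k then
      (volume (ball (0 : EuclideanSpace ℝ (Fin n)) 1)).toReal * (σ ^ (n + 2) / (n + 2)) else 0 := by
  split_ifs with h
  · subst h
    have h1 := norm_int hn σ hσ
    simp_rw [EuclideanSpace.real_norm_sq_eq, pow_two (_ : ℝ)] at h1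
    rw [integral_finsetSum _ (fun i _ => cont_int (by fun_prop) σ)] at h1
    rw [Finset.sum_congr rfl (fun i _ => diag_eq i j σ)] at h1
    simp only [Finset.sum_const, Finset.card_univ, Fintype.card_fin, nsmul_eq_mul] at h1
    have hn' : (n : ℝ) ≠ 0 := by positivity
    apply mul_left_cancel₀ hn'
    rw [h1]
    ring
  · exact off_diag j k h σ

lemma quad_int {n : ℕ} (hn : 1 ≤ n) (σ : ℝ) (hσ : 0 < σ) (p : Fin n → Fin n → ℝ) :
    ∫ x in ball (0 : EuclideanSpace ℝ (Fin n)) σ, ∑ i, (2 * ∑ j, x j * p i j) ^ 2 =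
      4 * (volume (ball (0 : EuclideanSpace ℝ (Fin n)) 1)).toReal / (n + 2) *
        (∑ i, ∑ j, p i j ^ 2) * σ ^ (n + 2) := by
  have h : ∀ x : EuclideanSpace ℝ (Fin n), ∑ i, (2 * ∑ j, x j * p i j) ^ 2 =
      ∑ i, ∑ j, ∑ k, (4 * p i j * p i k) * (x j * x k) := by
    intro x
    refine Finset.sum_congr rfl fun i _ => ?_
    rw [mul_pow, pow_two (∑ j, _), Finset.sum_mul_sum, Finset.mul_sum]
    refine Finset.sum_congr rfl fun j _ => ?_
    rw [Finset.mul_sum]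
    refine Finset.sum_congr rfl fun k _ => ?_
    ring
  simp_rw [h]
  rw [integral_finsetSum _ (fun i _ => cont_int (by fun_prop) σ), Finset.mul_sum, Finset.sum_mul]
  refine Finset.sum_congr rfl fun i _ => ?_
  rw [integral_finsetSum _ (fun i _ => cont_int (by fun_prop) σ), Finset.mul_sum, Finset.sum_mul]
  refine Finset.sum_congr rfl fun j _ => ?_
  rw [integral_finsetSum _ (fun i _ => cont_int (by fun_prop) σ)]
  simp_rw [integral_const_mul, second_moment hn σ hσ]
  simp
  ring

lemma grad_sq {n m : ℕ} (u : EuclideanSpace ℝ (Fin n) → EuclideanSpace ℝ (Fin m))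
    (hu : Differentiable ℝ u) (Q : EuclideanSpace ℝ (Fin m)) (x : EuclideanSpace ℝ (Fin n)) :
    ‖gradient (fun y => ‖u y - Q‖ ^ 2) x‖ ^ 2 = ∑ i, (2 * ⟪u x - Q, pd i u x⟫) ^ 2 := by
  rw [EuclideanSpace.real_norm_sq_eq]
  refine Finset.sum_congr rfl fun i _ => ?_
  congr 1
  have h1 : (gradient (fun y => ‖u y - Q‖ ^ 2) x) i =
      ⟪gradient (fun y => ‖u y - Q‖ ^ 2) x, EuclideanSpace.single i (1 : ℝ)⟫ := by
    simp [EuclideanSpace.inner_single_right, -inner_gradient_left]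
  have h2 := (((hu x).hasFDerivAt.sub_const Q).norm_sq).fderiv
  rw [h1, inner_gradient_left, h2]
  simp [pd, inner_sub_left]

lemma remainder {n m : ℕ} (u : EuclideanSpace ℝ (Fin n) → EuclideanSpace ℝ (Fin m))
    (hu : ContDiff ℝ (⊤ : ℕ∞) u) (i : Fin n) :
    (fun x => (2 * ⟪u x - u 0, pd i u x⟫) ^ 2 - (2 * ∑ j, x j * pullback u i j 0) ^ 2)
      =o[𝓝 0] fun x => ‖x‖ ^ 2 := by
  have hd : Differentiable ℝ u := hu.differentiable (by simp)
  have hpd : Continuous (pd i u) := by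
    unfold pd
    exact (hu.continuous_fderiv (by simp)).clm_apply continuous_const
  have hlin : ∀ x : EuclideanSpace ℝ (Fin n),
      ∑ j, x j * pullback u i j 0 = ⟪fderiv ℝ u 0 x, pd i u 0⟫ := by
    intro x
    have hx : x = ∑ j, x j • EuclideanSpace.single j (1 : ℝ) := by
      simpa using ((EuclideanSpace.basisFun (Fin n) ℝ).sum_repr x).symm
    conv_rhs => rw [hx, map_sum, sum_inner]
    refine Finset.sum_congr rfl fun j _ => ?_
    rw [map_smul, real_inner_smul_left, pullback, real_inner_comm]
    rfl
  simp_rw [hlin]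
  have ho : (fun x => u x - u 0 - fderiv ℝ u 0 x) =o[𝓝 0] fun x => x := by
    simpa using (hd 0).hasFDerivAt.isLittleO
  have hO : (fun x => fderiv ℝ u 0 x) =O[𝓝 0] fun x => x :=
    (fderiv ℝ u 0).isBigO_id _
  have hO2 : (fun x => u x - u 0) =O[𝓝 0] fun x => x := by
    simpa using ho.isBigO.add hO
  have hb : (pd i u) =O[𝓝 0] fun _ => (1 : ℝ) := hpd.continuousAt.tendsto.isBigO_one ℝ
  have hs : (fun x => pd i u x - pd i u 0) =o[𝓝 0] fun _ => (1 : ℝ) := by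
    rw [isLittleO_one_iff]
    have : Tendsto (fun x => pd i u x - pd i u 0) (𝓝 0) (𝓝 (pd i u 0 - pd i u 0)) :=
      (hpd.tendsto 0).sub tendsto_const_nhds
    simpa using this
  have inner_O : ∀ a b : EuclideanSpace ℝ (Fin n) → EuclideanSpace ℝ (Fin m),
      (fun x => ⟪a x, b x⟫) =O[𝓝 0] fun x => ‖a x‖ * ‖b x‖ := fun a b =>
    IsBigO.of_bound 1 (Eventually.of_forall fun x => by
      simpa using abs_real_inner_le_norm (a x) (b x))
  have d1 : (fun x => ⟪u x - u 0 - fderiv ℝ u 0 x, pd i u x⟫) =o[𝓝 0] fun x => ‖x‖ := by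
    refine (inner_O _ _).trans_isLittleO ?_
    simpa using ho.norm_norm.mul_isBigO hb.norm_left
  have d2 : (fun x => ⟪fderiv ℝ u 0 x, pd i u x - pd i u 0⟫) =o[𝓝 0] fun x => ‖x‖ := by
    refine (inner_O _ _).trans_isLittleO ?_
    simpa using hO.norm_norm.mul_isLittleO hs.norm_left
  have s1 : (fun x => ⟪u x - u 0, pd i u x⟫) =O[𝓝 0] fun x => ‖x‖ := by
    refine (inner_O _ _).trans ?_
    simpa using hO2.norm_norm.mul hb.norm_left
  have s2 : (fun x => ⟪fderiv ℝ u 0 x, pd i u 0⟫) =O[𝓝 0] fun x => ‖x‖ := by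
    refine (inner_O _ _).trans ?_
    simpa using hO.norm_norm.mul ((isBigO_const_const (pd i u 0) (one_ne_zero (α := ℝ)) (𝓝 (0 : EuclideanSpace ℝ (Fin n)))).norm_left)
  have key := ((d1.add d2).mul_isBigO (s1.add s2)).const_mul_left 4
  refine key.congr (fun x => ?_) (fun x => by ring)
  simp only [inner_sub_left, inner_sub_right]
  ring

theorem stmt_9 {n m : ℕ} (hn : 1 ≤ n) (hm : 1 ≤ m)
    (u : EuclideanSpace ℝ (Fin n) → EuclideanSpace ℝ (Fin m))
    (husmooth : ContDiff ℝ (⊤ : ℕ∞) u)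
    (Q : EuclideanSpace ℝ (Fin m)) (hQ : Q = u 0)
    (ω : ℝ) (hω : ω = (volume (ball (0 : EuclideanSpace ℝ (Fin n)) 1)).toReal) :
    (fun σ : ℝ =>
        (∫ x in ball (0 : EuclideanSpace ℝ (Fin n)) σ,
          ‖gradient (fun y => ‖u y - Q‖ ^ 2) x‖ ^ 2) -
        4 * ω / ((n : ℝ) + 2) * pullbackNormSq u 0 * σ ^ (n + 2))
      =o[𝓝[>] (0 : ℝ)] fun σ => σ ^ (n + 2) := by
  subst hQ
  have hd : Differentiable ℝ u := husmooth.differentiable (by simp)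
  have hpd : ∀ i, Continuous (pd i u) := fun i => by
    unfold pd
    exact (husmooth.continuous_fderiv (by simp)).clm_apply continuous_const
  have hc := hd.continuous
  have : Nonempty (Fin n) := ⟨⟨0, hn⟩⟩
  have hω0 : 0 ≤ ω := hω ▸ ENNReal.toReal_nonneg
  have hrem : (fun x : EuclideanSpace ℝ (Fin n) => ∑ i, ((2 * ⟪u x - u 0, pd i u x⟫) ^ 2 -
      (2 * ∑ j, x j * pullback u i j 0) ^ 2)) =o[𝓝 0] fun x => ‖x‖ ^ 2 :=
    IsLittleO.fun_sum fun i _ => remainder u husmooth i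
  simp_rw [grad_sq u hd]
  rw [isLittleO_iff]
  intro c hcpos
  have hc' : 0 < c / (ω + 1) := by positivity
  obtain ⟨δ, hδ, hball⟩ := Metric.eventually_nhds_iff_ball.1 (isLittleO_iff.1 hrem hc')
  filter_upwards [Ioo_mem_nhdsGT hδ] with σ hσ
  have hσ0 : 0 < σ := hσ.1
  have hq := quad_int hn σ hσ0 (fun i j => pullback u i j 0)
  rw [← hω] at hq
  rw [pullbackNormSq, ← hq, ← integral_sub (cont_int (by fun_prop) σ) (cont_int (by fun_prop) σ)]
  simp_rw [← Finset.sum_sub_distrib]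
  have hb := norm_setIntegral_le_of_norm_le_const
    (μ := (volume : Measure (EuclideanSpace ℝ (Fin n)))) (s := ball 0 σ)
    (f := fun x => ∑ i, ((2 * ⟪u x - u 0, pd i u x⟫) ^ 2 -
      (2 * ∑ j, x j * pullback u i j 0) ^ 2)) (C := c / (ω + 1) * σ ^ 2) measure_ball_lt_top
    (fun x hx => by
      refine (hball x (ball_subset_ball hσ.2.le hx)).trans ?_
      have hx' : ‖x‖ < σ := by simpa using hx
      rw [norm_pow, norm_norm]
      gcongr)
  refine hb.trans ?_
  have hv : (volume : Measure (EuclideanSpace ℝ (Fin n))).real (ball 0 σ) = σ ^ n * ω := by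
    rw [Measure.real, Measure.addHaar_ball _ _ hσ0.le, hω]
    simp [hσ0.le]
  rw [hv, Real.norm_of_nonneg (by positivity)]
  have : c / (ω + 1) * σ ^ 2 * (σ ^ n * ω) = (ω / (ω + 1)) * (c * σ ^ (n + 2)) := by
    rw [pow_add]; ring
  rw [this]
  apply mul_le_of_le_one_left (by positivity)
  rw [div_le_one (by positivity)]
  linarith
end
end

section
/- Let n, m ≥ 1, let u : ℝⁿ → ℝᵐ be a smooth map each of whose coordinate functions is harmonic (componentwise harmonic), and let x₀ ∈ ℝⁿ. Define the pull-back tensor π_{ij}(x) = ⟪∂_i u(x), ∂_j u(x)⟫, the energy density |∇u|²(x) = Σᵢ π_{ii}(x), and |π|²(x) = Σ_{i,j} π_{ij}(x)². Then the mean value inequality ⨍_{B_σ(x₀)} |∇u|² dμ ≥ |∇u|²(x₀) + ((|π|²(x₀) − (|∇u|²(x₀))²)/(n+2)) σ² + o(σ²) holds as σ → 0⁺; that is, the negative part of the difference between the left-hand side and the first two terms on the right is o(σ²). (This is the instance of the paper's Lemma 3.2, the mean value inequality for harmonic maps into a convex ball in a CAT(1) space, in which the domain manifold is flat Euclidean space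 ℝⁿ, so Ric ≡ 0, and the CAT(1) target is Euclidean space ℝᵐ.) -/
open MeasureTheory Metric Real Filter Asymptotics Topology RealInnerProductSpace

noncomputable section

abbrev EE (n : ℕ) := EuclideanSpace ℝ (Fin n)

lemma pd_contDiff {n : ℕ} {F : Type*} [NormedAddCommGroup F] [NormedSpace ℝ F]
    {f : EE n → F} (hf : ContDiff ℝ (⊤ : ℕ∞) f) (i : Fin n) :
    ContDiff ℝ (⊤ : ℕ∞) (pd i f) := by
  have h : ContDiff ℝ (⊤ : ℕ∞) (fderiv ℝ f) := hf.fderiv_right (by simp)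
  exact h.clm_apply contDiff_const

lemma pd_pd {n : ℕ} {F : Type*} [NormedAddCommGroup F] [NormedSpace ℝ F]
    {f : EE n → F} (hf : ContDiff ℝ (⊤ : ℕ∞) f) (i j : Fin n) (x : EE n) :
    pd i (pd j f) x =
      fderiv ℝ (fderiv ℝ f) x (EuclideanSpace.single i 1) (EuclideanSpace.single j 1) := by
  have h : ContDiff ℝ (⊤ : ℕ∞) (fderiv ℝ f) := hf.fderiv_right (by simp)
  have hd : DifferentiableAt ℝ (fderiv ℝ f) x := (h.differentiable (by simp)) x
  have : HasFDerivAt (pd j f) _ x := hd.hasFDerivAt.clm_apply (hasFDerivAt_const _ x)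
  rw [pd, this.fderiv]
  simp

lemma snd_symm {n : ℕ} {F : Type*} [NormedAddCommGroup F] [NormedSpace ℝ F]
    {f : EE n → F} (hf : ContDiff ℝ (⊤ : ℕ∞) f) (x v w : EE n) :
    fderiv ℝ (fderiv ℝ f) x v w = fderiv ℝ (fderiv ℝ f) x w v :=
  (hf.contDiffAt.isSymmSndFDerivAt (by
    rw [minSmoothness_of_isRCLikeNormedField]
    exact WithTop.coe_le_coe.2 (le_top : (2 : ℕ∞) ≤ ⊤))) v w

lemma pd_comm {n : ℕ} {F : Type*} [NormedAddCommGroup F] [NormedSpace ℝ F]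
    {f : EE n → F} (hf : ContDiff ℝ (⊤ : ℕ∞) f) (i j : Fin n) :
    pd i (pd j f) = pd j (pd i f) := by
  funext x
  rw [pd_pd hf, pd_pd hf, snd_symm hf]

lemma pd_sum {n : ℕ} {ι : Type*} (s : Finset ι) (c : ι → ℝ) (f : ι → EE n → ℝ)
    (hf : ∀ k, ContDiff ℝ (⊤ : ℕ∞) (f k)) (i : Fin n) :
    pd i (fun x => ∑ k ∈ s, c k * f k x) = fun x => ∑ k ∈ s, c k * pd i (f k) x := by
  funext x
  have hd : ∀ k, DifferentiableAt ℝ (f k) x := fun k => (hf k).differentiable (by simp) x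
  have : HasFDerivAt (fun x => ∑ k ∈ s, c k * f k x) (∑ k ∈ s, c k • fderiv ℝ (f k) x) x :=
    HasFDerivAt.fun_sum fun k _ => (hd k).hasFDerivAt.const_mul (c k)
  rw [pd, this.fderiv]
  simp [pd, sum_apply]

lemma lap_sum {n : ℕ} {ι : Type*} (s : Finset ι) (c : ι → ℝ) (f : ι → EE n → ℝ)
    (hf : ∀ k, ContDiff ℝ (⊤ : ℕ∞) (f k)) (x : EE n) :
    lap (fun x => ∑ k ∈ s, c k * f k x) x = ∑ k ∈ s, c k * lap (f k) x := by
  unfold lap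
  simp_rw [pd_sum s c f hf, pd_sum s c _ (fun k => pd_contDiff (hf k) _), Finset.mul_sum]
  rw [Finset.sum_comm]

lemma lap_pd {n : ℕ} {f : EE n → ℝ} (hf : Harmonic f) (k : Fin n) (x : EE n) :
    lap (pd k f) x = 0 := by
  have h1 : lap f = fun _ => 0 := funext hf.2
  have h2 : pd k (lap f) x = 0 := by rw [h1]; simp [pd]
  have h3 : lap f = fun x => ∑ i, (1:ℝ) * pd i (pd i f) x := by funext x; simp [lap]
  rw [h3, pd_sum _ _ _ (fun i => pd_contDiff (pd_contDiff hf.1 i) i)] at h2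
  rw [← h2, lap]
  refine Finset.sum_congr rfl fun i _ => ?_
  rw [pd_comm hf.1 i k, pd_comm (pd_contDiff hf.1 i) i k, one_mul]

lemma int_iso {n : ℕ} (T : EE n ≃ₗᵢ[ℝ] EE n) (f : EE n → ℝ) (σ : ℝ) :
    ∫ x in ball (0 : EE n) σ, f (T x) = ∫ x in ball (0 : EE n) σ, f x := by
  have := T.measurePreserving.setIntegral_preimage_emb
    T.toHomeomorph.measurableEmbedding f (ball 0 σ)
  rw [← this]
  congr 2
  ext x; simp

lemma int_lin {n : ℕ} (L : EE n →L[ℝ] ℝ) (σ : ℝ) :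
    ∫ x in ball (0 : EE n) σ, L x = 0 := by
  have := int_iso (LinearIsometryEquiv.neg ℝ) (fun x => L x) σ
  simp [integral_neg] at this
  linarith

lemma int_off {n : ℕ} (i j : Fin n) (hij : i ≠ j) (σ : ℝ) :
    ∫ x in ball (0 : EE n) σ, x i * x j = 0 := by
  have := int_iso (LinearIsometryEquiv.piLpCongrRight 2
    (fun k : Fin n => if k = i then LinearIsometryEquiv.neg ℝ else LinearIsometryEquiv.refl ℝ ℝ))
    (fun x => x i * x j) σ
  simp [LinearIsometryEquiv.piLpCongrRight_apply, hij.symm, integral_neg] at this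
  linarith

lemma int_diag {n : ℕ} (i j : Fin n) (σ : ℝ) :
    ∫ x in ball (0 : EE n) σ, x i * x i = ∫ x in ball (0 : EE n) σ, x j * x j := by
  have := int_iso (LinearIsometryEquiv.piLpCongrLeft 2 ℝ ℝ (Equiv.swap i j))
    (fun x : EE n => x j * x j) σ
  simpa [LinearIsometryEquiv.piLpCongrLeft_apply, Equiv.piCongrLeft'] using this

lemma integrableOn_ball {n : ℕ} {f : EE n → ℝ} (hf : Continuous f) (x : EE n) (σ : ℝ) :
    IntegrableOn f (ball x σ) :=
  (hf.continuousOn.integrableOn_compact (isCompact_closedBall x σ)).mono_set ball_subset_closedBall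

lemma int_quad {n : ℕ} (B : EE n →L[ℝ] EE n →L[ℝ] ℝ)
    (hB : ∑ i, B (EuclideanSpace.single i 1) (EuclideanSpace.single i 1) = 0) (σ : ℝ) :
    ∫ x in ball (0 : EE n) σ, B x x = 0 := by
  have h1 : ∀ x : EE n, B x x = ∑ i, ∑ j, B (EuclideanSpace.single i 1)
      (EuclideanSpace.single j 1) * (x i * x j) := by
    intro x
    have hx : x = ∑ i, x i • EuclideanSpace.single i (1:ℝ) := by
      ext k; simp [Finset.sum_apply, Pi.single_apply]
    conv_lhs => rw [hx]
    simp only [map_sum, map_smul, sum_apply, smul_apply,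
      smul_eq_mul, Finset.mul_sum]
    rw [Finset.sum_comm]
    refine Finset.sum_congr rfl fun i _ => Finset.sum_congr rfl fun j _ => ?_
    ring
  have hc : ∀ i j : Fin n, Integrable (fun x : EE n => B (EuclideanSpace.single i 1)
      (EuclideanSpace.single j 1) * (x i * x j)) (volume.restrict (ball 0 σ)) := fun i j =>
    integrableOn_ball (by fun_prop) 0 σ
  simp_rw [h1]
  rw [integral_finsetSum _ fun i _ => integrable_finsetSum _ fun j _ => hc i j]
  simp_rw [integral_finsetSum _ fun j _ => hc _ j, integral_const_mul]
  have h2 : ∀ i : Fin n, ∑ j, B (EuclideanSpace.single i 1) (EuclideanSpace.single j 1) *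
      ∫ x in ball (0 : EE n) σ, x i * x j = B (EuclideanSpace.single i 1)
      (EuclideanSpace.single i 1) * ∫ x in ball (0 : EE n) σ, x i * x i := fun i =>
    Finset.sum_eq_single i (fun j _ hj => by rw [int_off i j hj.symm, mul_zero]) (by simp)
  simp_rw [h2]
  rcases isEmpty_or_nonempty (Fin n) with h | ⟨⟨k⟩⟩
  · simp
  · rw [Finset.sum_congr rfl fun i _ => by rw [int_diag i k], ← Finset.sum_mul, hB, zero_mul]

lemma taylor2 {n : ℕ} {w : EE n → ℝ} (hw : ContDiff ℝ (⊤ : ℕ∞) w) (x₀ : EE n) {ε : ℝ}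
    (hε : 0 < ε) : ∃ δ > 0, ∀ x ∈ ball x₀ δ,
      |w x - w x₀ - fderiv ℝ w x₀ (x - x₀)
        - (1/2) * fderiv ℝ (fderiv ℝ w) x₀ (x - x₀) (x - x₀)| ≤ ε * ‖x - x₀‖ ^ 2 := by
  have h : ContDiff ℝ (⊤ : ℕ∞) (fderiv ℝ w) := hw.fderiv_right (by simp)
  have hd : HasFDerivAt (fderiv ℝ w) _ x₀ := (h.differentiable (by simp) x₀).hasFDerivAt
  set D := fderiv ℝ w x₀ with hD
  set B := fderiv ℝ (fderiv ℝ w) x₀ with hB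
  obtain ⟨δ, hδ, hb⟩ := Metric.eventually_nhds_iff_ball.1 (hd.isLittleO.def hε)
  refine ⟨δ, hδ, fun x hx => ?_⟩
  set R : EE n → ℝ := fun y => w y - w x₀ - D (y - x₀) - (1/2) * B (y - x₀) (y - x₀) with hR
  have hR' : ∀ y, HasFDerivAt R (fderiv ℝ w y - D - B (y - x₀)) y := by
    intro y
    have h1 : HasFDerivAt w _ y := (hw.differentiable (by simp) y).hasFDerivAt
    have h2 : HasFDerivAt (fun y => y - x₀) (ContinuousLinearMap.id ℝ (EE n)) y :=
      (hasFDerivAt_id y).sub_const x₀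
    have h3 := D.hasFDerivAt.comp y h2
    have h4 := (B.hasFDerivAt.comp y h2).clm_apply h2
    have h5 := ((h1.sub_const (w x₀)).sub h3).sub (h4.const_mul (1/2))
    refine h5.congr_fderiv ?_
    ext v
    have := snd_symm hw x₀ v (y - x₀)
    simp only [← hB] at this
    simp only [map_sub, sub_apply] at this
    simp
    linarith
  have := Convex.norm_image_sub_le_of_norm_hasFDerivWithin_le (𝕜 := ℝ) (f := R)
    (s := closedBall x₀ ‖x - x₀‖) (C := ε * ‖x - x₀‖) (x := x₀) (y := x)
    (fun y _ => (hR' y).hasFDerivWithinAt) (fun y hy => ?_) (convex_closedBall _ _)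
    (by simp) (by simp [dist_eq_norm])
  · simpa [hR, pow_two, mul_assoc] using this
  · have hy1 : ‖y - x₀‖ ≤ ‖x - x₀‖ := by simpa [dist_eq_norm] using hy
    have hx1 : ‖x - x₀‖ < δ := by simpa [dist_eq_norm] using hx
    exact (hb y (by simpa [dist_eq_norm] using hy1.trans_lt hx1)).trans (by gcongr)

lemma int_shift {n : ℕ} (x₀ : EE n) (f : EE n → ℝ) (σ : ℝ) :
    ∫ x in ball x₀ σ, f (x - x₀) = ∫ x in ball (0 : EE n) σ, f x := by
  have := (measurePreserving_sub_right (volume : Measure (EE n)) x₀).setIntegral_preimage_emb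
    (Homeomorph.subRight x₀).measurableEmbedding f (ball 0 σ)
  rw [← this]
  congr 2
  ext x; simp [dist_eq_norm]

lemma mean_o {n : ℕ} {w : EE n → ℝ} (hw : ContDiff ℝ (⊤ : ℕ∞) w) (x₀ : EE n)
    (hl : lap w x₀ = 0) :
    (fun σ : ℝ => (⨍ x in ball x₀ σ, w x) - w x₀) =o[𝓝[>] (0 : ℝ)] fun σ => σ ^ 2 := by
  rw [isLittleO_iff]
  intro ε hε
  obtain ⟨δ, hδ, hb⟩ := taylor2 hw x₀ hε
  filter_upwards [Ioo_mem_nhdsGT hδ] with σ hσ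
  set D := fderiv ℝ w x₀ with hD
  set B := fderiv ℝ (fderiv ℝ w) x₀ with hB
  have hwc := hw.continuous
  have htr : ∑ i, B (EuclideanSpace.single i 1) (EuclideanSpace.single i 1) = 0 := by
    rw [← hl, lap]; exact Finset.sum_congr rfl fun i _ => (pd_pd hw i i x₀).symm
  have hv : 0 < volume.real (ball x₀ σ) := by
    rw [measureReal_def]
    exact ENNReal.toReal_pos (measure_ball_pos _ _ hσ.1).ne' measure_ball_lt_top.ne
  have i1 : IntegrableOn w (ball x₀ σ) := integrableOn_ball hwc x₀ σ
  have i2 : IntegrableOn (fun _ => w x₀) (ball x₀ σ) := integrableOn_ball (by fun_prop) x₀ σ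
  have i3 : IntegrableOn (fun x => D (x - x₀)) (ball x₀ σ) := integrableOn_ball (by fun_prop) x₀ σ
  have i4 : IntegrableOn (fun x => (1/2) * B (x - x₀) (x - x₀)) (ball x₀ σ) :=
    integrableOn_ball (by fun_prop) x₀ σ
  have key : ∫ x in ball x₀ σ, (w x - w x₀ - D (x - x₀) - (1/2) * B (x - x₀) (x - x₀))
      = (∫ x in ball x₀ σ, w x) - volume.real (ball x₀ σ) * w x₀ := by
    have i5 : IntegrableOn (fun x => w x - w x₀) (ball x₀ σ) := i1.sub i2
    have i6 : IntegrableOn (fun x => w x - w x₀ - D (x - x₀)) (ball x₀ σ) := i5.sub i3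
    rw [integral_sub i6 i4, integral_sub i5 i3, integral_sub i1 i2,
      integral_const_mul, int_shift x₀ (fun x => D x), int_shift x₀ (fun x => B x x),
      int_lin, int_quad B htr]
    simp
  have hbd := norm_setIntegral_le_of_norm_le_const (μ := volume) (s := ball x₀ σ) (C := ε * σ ^ 2)
    (f := fun x => w x - w x₀ - D (x - x₀) - (1/2) * B (x - x₀) (x - x₀))
    measure_ball_lt_top (fun x hx => by
      refine (hb x (ball_subset_ball hσ.2.le hx)).trans ?_
      have : ‖x - x₀‖ ≤ σ := by simpa [dist_eq_norm] using (mem_ball.1 hx).le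
      gcongr)
  rw [key] at hbd
  have e : (⨍ x in ball x₀ σ, w x) - w x₀ = (volume.real (ball x₀ σ))⁻¹ *
      ((∫ x in ball x₀ σ, w x) - volume.real (ball x₀ σ) * w x₀) := by
    rw [setAverage_eq, smul_eq_mul]; field_simp
  rw [e, norm_mul, norm_inv, norm_of_nonneg hv.le, inv_mul_le_iff₀ hv]
  have : ‖σ ^ 2‖ = σ ^ 2 := norm_of_nonneg (sq_nonneg σ)
  rw [this]
  linarith

theorem stmt_10 {n m : ℕ} (hn : 1 ≤ n) (hm : 1 ≤ m)
    (u : EuclideanSpace ℝ (Fin n) → EuclideanSpace ℝ (Fin m))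
    (husmooth : ContDiff ℝ (⊤ : ℕ∞) u)
    (huharm : ∀ α : Fin m, Harmonic (fun x => u x α))
    (x₀ : EuclideanSpace ℝ (Fin n)) :
    (fun σ : ℝ => min 0
        ((⨍ x in ball x₀ σ, energyDensity u x) -
          (energyDensity u x₀ +
            (pullbackNormSq u x₀ - (energyDensity u x₀) ^ 2) / ((n : ℝ) + 2) * σ ^ 2)))
      =o[𝓝[>] (0 : ℝ)] fun σ => σ ^ 2 := by
  -- components of the partial derivatives
  have hcomp : ∀ (i : Fin n) (α : Fin m) x, pd i u x α = pd i (fun x => u x α) x := by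
    intro i α x
    have h1 : HasFDerivAt u _ x := (husmooth.differentiable (by simp) x).hasFDerivAt
    have h2 : HasFDerivAt (fun x => u x α) _ x :=
      (EuclideanSpace.proj (𝕜 := ℝ) α).hasFDerivAt.comp x h1
    rw [pd, pd, h2.fderiv]
    simp
  set w : EE n → ℝ := fun x => ∑ k : Fin n × Fin m,
    pd k.1 u x₀ k.2 * pd k.1 (fun x => u x k.2) x with hw
  have hf : ∀ k : Fin n × Fin m, ContDiff ℝ (⊤ : ℕ∞) (pd k.1 (fun x => u x k.2)) := fun k =>
    pd_contDiff (huharm k.2).1 k.1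
  have hws : ContDiff ℝ (⊤ : ℕ∞) w := ContDiff.sum fun k _ => contDiff_const.mul (hf k)
  have hwl : lap w x₀ = 0 := by
    rw [hw, lap_sum _ _ _ hf]
    exact Finset.sum_eq_zero fun k _ => by rw [lap_pd (huharm k.2), mul_zero]
  have hE : ∀ x, energyDensity u x = ∑ k : Fin n × Fin m, (pd k.1 (fun x => u x k.2) x) ^ 2 := by
    intro x
    simp [energyDensity, EuclideanSpace.norm_sq_eq, Fintype.sum_prod_type, hcomp]
  have hw0 : w x₀ = energyDensity u x₀ := by
    rw [hE, hw]
    exact Finset.sum_congr rfl fun k _ => by rw [hcomp, pow_two]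
  have hle : ∀ x, 2 * w x - energyDensity u x₀ ≤ energyDensity u x := by
    intro x
    rw [hE, hE, hw, Finset.mul_sum, ← Finset.sum_sub_distrib]
    refine Finset.sum_le_sum fun k _ => ?_
    rw [hcomp]
    nlinarith [sq_nonneg (pd k.1 (fun x => u x k.2) x - pd k.1 (fun x => u x k.2) x₀)]
  have hEc : Continuous (energyDensity u) := by
    have : energyDensity u = _ := funext hE
    rw [this]
    exact continuous_finsetSum _ fun k _ => (hf k).continuous.pow 2
  have hpi : pullbackNormSq u x₀ ≤ (energyDensity u x₀) ^ 2 := by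
    rw [pullbackNormSq, energyDensity, pow_two, Finset.sum_mul_sum]
    refine Finset.sum_le_sum fun i _ => Finset.sum_le_sum fun j _ => ?_
    rw [pullback, ← mul_pow, ← sq_abs]
    gcongr
    exact abs_real_inner_le_norm _ _
  refine IsBigO.trans_isLittleO (IsBigO.of_bound 2 ?_) (mean_o hws x₀ hwl)
  filter_upwards [self_mem_nhdsWithin] with σ hσ
  have hσ : 0 < σ := hσ
  have hv : 0 < volume.real (ball x₀ σ) := by
    rw [measureReal_def]
    exact ENNReal.toReal_pos (measure_ball_pos _ _ hσ).ne' measure_ball_lt_top.ne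
  have i1 : IntegrableOn w (ball x₀ σ) := integrableOn_ball hws.continuous x₀ σ
  have i2 : IntegrableOn (fun _ => energyDensity u x₀) (ball x₀ σ) :=
    integrableOn_ball (by fun_prop) x₀ σ
  have hint : ∫ x in ball x₀ σ, (2 * w x - energyDensity u x₀) ≤
      ∫ x in ball x₀ σ, energyDensity u x :=
    integral_mono ((i1.const_mul 2).sub i2) (integrableOn_ball hEc x₀ σ) hle
  rw [integral_sub (i1.const_mul 2) i2, integral_const_mul] at hint
  have hav : 2 * ((⨍ x in ball x₀ σ, w x) - w x₀) ≤
      (⨍ x in ball x₀ σ, energyDensity u x) - energyDensity u x₀ := by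
    have h := mul_le_mul_of_nonneg_left hint (inv_nonneg.2 hv.le)
    simp only [setIntegral_const, smul_eq_mul, mul_sub] at h
    rw [inv_mul_cancel_left₀ hv.ne'] at h
    rw [setAverage_eq, setAverage_eq, hw0, smul_eq_mul, smul_eq_mul]
    linarith
  have hc : (pullbackNormSq u x₀ - (energyDensity u x₀) ^ 2) / ((n : ℝ) + 2) * σ ^ 2 ≤ 0 :=
    mul_nonpos_of_nonpos_of_nonneg
      (div_nonpos_of_nonpos_of_nonneg (by linarith) (by positivity)) (sq_nonneg _)
  rw [norm_eq_abs, norm_eq_abs, abs_of_nonpos (min_le_left _ _)]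
  have h3 := neg_abs_le ((⨍ x in ball x₀ σ, w x) - w x₀)
  have h4 := abs_nonneg ((⨍ x in ball x₀ σ, w x) - w x₀)
  rw [neg_le]
  exact le_min (by linarith) (by linarith)
end
end
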